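/- Iterated Hölder estimate for marginal densities: let β₀ < β < 0, W ≥ 0 measurable symmetric on X² with A := sup_x ∫ e^{−βW(x,y)}dμ₀(y) < ∞ and (1/N) log Z_{N,β'} ≤ C for all β' ∈ [β₀, β]. Then the density ρ_j^{(N)} of the j-th marginal of the Gibbs measure μ_β^{(N)} satisfies ρ_j^{(N)}(x₁,…,x_j) ≤ C_j e^{−(β/N) Σ_{k≠l≤j} W(x_k,x_l)} for a constant C_j independent of N, for all N sufficiently large. -/

import Mathlib

open MeasureTheory
open scoped ENNReal

/-- The renormalized mean-field pair Hamiltonian `H^{(N)}(x) = (1/N) Σ_{i≠j} W(x_i,x_j)`. -/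
noncomputable def pairHam {X : Type*} (W : X → X → ℝ) (N : ℕ) (x : Fin N → X) : ℝ :=
  (1 / (N : ℝ)) * ∑ i : Fin N, ∑ k : Fin N, if i ≠ k then W (x i) (x k) else 0

open ProbabilityTheory in
theorem aux_map_pi {X : Type*} [MeasurableSpace X] (μ₀ : Measure X) [IsProbabilityMeasure μ₀]
    {ι κ : Type*} [Fintype ι] [Fintype κ] (g : κ → ι) (hg : Function.Injective g) :
    (Measure.pi (fun _ : ι => μ₀)).map (fun x k => x (g k)) = Measure.pi (fun _ : κ => μ₀) := by
  have h1 : iIndepFun (fun (i : ι) (x : ι → X) => x i) (Measure.pi (fun _ : ι => μ₀)) :=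
    iIndepFun_pi (X := fun (_ : ι) (x : X) => x) (fun i => aemeasurable_id)
  have h2 := h1.precomp hg
  have h3 := (iIndepFun_iff_map_fun_eq_pi_map
    (fun k => (measurable_pi_apply (g k)).aemeasurable)).1 h2
  rw [h3]
  congr 1
  funext k
  exact (measurePreserving_eval (fun _ : ι => μ₀) (g k)).map_eq

open ProbabilityTheory in
theorem aux_lintegral_prod {X : Type*} [MeasurableSpace X] (μ₀ : Measure X)
    [IsProbabilityMeasure μ₀] {ι : Type*} [Fintype ι] (f : X → ℝ≥0∞) (hf : Measurable f) :
    ∫⁻ x : ι → X, ∏ i, f (x i) ∂(Measure.pi (fun _ : ι => μ₀))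
      = (∫⁻ y, f y ∂μ₀) ^ Fintype.card ι := by
  have h1 : iIndepFun (fun (i : ι) (x : ι → X) => f (x i)) (Measure.pi (fun _ : ι => μ₀)) :=
    iIndepFun_pi (X := fun (_ : ι) (x : X) => f x) (fun i => hf.aemeasurable)
  rw [lintegral_prod_eq_prod_lintegral_of_indepFun _ _ h1
    (fun i => hf.comp (measurable_pi_apply i))]
  have : ∀ i : ι, ∫⁻ x : ι → X, f (x i) ∂(Measure.pi (fun _ : ι => μ₀)) = ∫⁻ y, f y ∂μ₀ := by
    intro i
    exact (measurePreserving_eval (fun _ : ι => μ₀) i).lintegral_comp hf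
  simp [this]

/-- unnormalised pair energy -/
noncomputable def pairS {X : Type*} (W : X → X → ℝ) {ι : Type*} [Fintype ι] [DecidableEq ι]
    (x : ι → X) : ℝ :=
  ∑ i : ι, ∑ k : ι, if i ≠ k then W (x i) (x k) else 0

theorem pairS_nonneg {X : Type*} (W : X → X → ℝ) (hW0 : ∀ x y, 0 ≤ W x y)
    {ι : Type*} [Fintype ι] [DecidableEq ι] (x : ι → X) : 0 ≤ pairS W x := by
  refine Finset.sum_nonneg fun i _ => Finset.sum_nonneg fun k _ => ?_
  split_ifs
  · exact hW0 _ _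
  · exact le_rfl

theorem measurable_pairS {X : Type*} [MeasurableSpace X] (W : X → X → ℝ)
    (hWmeas : Measurable (fun p : X × X => W p.1 p.2))
    {ι : Type*} [Fintype ι] [DecidableEq ι] :
    Measurable (fun x : ι → X => pairS W x) := by
  unfold pairS
  refine Finset.measurable_sum _ fun i _ => Finset.measurable_sum _ fun k _ => ?_
  split_ifs
  · have h : Measurable (fun a : ι → X => (a i, a k)) :=
      (measurable_pi_apply i).prodMk (measurable_pi_apply k)
    exact hWmeas.comp h
  · exact measurable_const

theorem pairS_equiv {X : Type*} (W : X → X → ℝ) {ι κ : Type*} [Fintype ι] [DecidableEq ι]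
    [Fintype κ] [DecidableEq κ] (e : κ ≃ ι) (x : ι → X) :
    pairS W x = pairS W (fun k => x (e k)) := by
  unfold pairS
  rw [← e.sum_comp]
  refine Finset.sum_congr rfl fun i _ => ?_
  rw [← e.sum_comp]
  refine Finset.sum_congr rfl fun k _ => ?_
  simp

theorem pairS_sum {X : Type*} (W : X → X → ℝ) (hWsym : ∀ x y, W x y = W y x)
    {ι κ : Type*} [Fintype ι] [DecidableEq ι]
    [Fintype κ] [DecidableEq κ] (x : ι ⊕ κ → X) :
    pairS W x = pairS W (fun i => x (Sum.inl i)) + pairS W (fun i => x (Sum.inr i))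
      + 2 * ∑ i, ∑ k, W (x (Sum.inl i)) (x (Sum.inr k)) := by
  have h : ∑ k : κ, ∑ i : ι, W (x (Sum.inr k)) (x (Sum.inl i))
      = ∑ i, ∑ k, W (x (Sum.inl i)) (x (Sum.inr k)) := by
    rw [Finset.sum_comm]
    simp_rw [hWsym (x (Sum.inr _))]
  unfold pairS
  simp only [Fintype.sum_sum_type, Finset.sum_add_distrib, ne_eq, Sum.inl.injEq, Sum.inr.injEq,
    reduceCtorEq, not_false_eq_true, if_true]
  rw [h]
  ring

theorem aux_rpow_exp (t p : ℝ) :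
    (ENNReal.ofReal (Real.exp t)) ^ p = ENNReal.ofReal (Real.exp (p * t)) := by
  rw [ENNReal.ofReal_rpow_of_pos (Real.exp_pos _), ← Real.exp_mul, mul_comm]

theorem aux_one_le {α : Type*} [MeasurableSpace α] (μ : Measure α) [IsProbabilityMeasure μ]
    (f : α → ℝ) (hf : ∀ x, 0 ≤ f x) : 1 ≤ ∫⁻ x, ENNReal.ofReal (Real.exp (f x)) ∂μ := by
  calc (1 : ℝ≥0∞) = ∫⁻ _, 1 ∂μ := by simp
    _ ≤ _ := lintegral_mono fun x => by
      rw [← ENNReal.ofReal_one]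
      exact ENNReal.ofReal_le_ofReal (Real.one_le_exp (hf x))

theorem aux_holder {X : Type*} [MeasurableSpace X]
    (μ₀ : Measure X) [IsProbabilityMeasure μ₀]
    (W : X → X → ℝ) (hWmeas : Measurable (fun p : X × X => W p.1 p.2))
    (hW0 : ∀ x y, 0 ≤ W x y) (b b0 : ℝ) (hb : 0 < b) (hb0 : b < b0)
    (A : ℝ≥0∞)
    (hint : ∀ x : X, ∫⁻ y, ENNReal.ofReal (Real.exp (b * W x y)) ∂μ₀ ≤ A)
    (j M N : ℕ) (hM : 0 < M) (hN : N = j + M) (y : Fin j → X) (K : ℝ)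
    (hK : K = 2 * j * b / (b0 - b)) (hNK : 2 * j + K ≤ N) :
    ∫⁻ z : Fin M → X, ENNReal.ofReal (Real.exp ((2 * b / N) * (∑ k, ∑ i, W (y k) (z i))
        + b / N * pairS W z)) ∂(Measure.pi (fun _ : Fin M => μ₀))
      ≤ A ^ (2 * j) *
        ((∫⁻ z : Fin M → X, ENNReal.ofReal (Real.exp (b / N * pairS W z))
          ∂(Measure.pi (fun _ : Fin M => μ₀))) *
        (∫⁻ z : Fin M → X, ENNReal.ofReal (Real.exp (b0 / M * pairS W z))
          ∂(Measure.pi (fun _ : Fin M => μ₀))) ^ (K / N)) := by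
  have hNpos : (0 : ℝ) < N := by
    have : 0 < N := by omega
    exact_mod_cast this
  have hMpos : (0 : ℝ) < M := by exact_mod_cast hM
  have hMN : (M : ℝ) ≤ N := by
    have : M ≤ N := by omega
    exact_mod_cast this
  have hd : 0 < b0 - b := by linarith
  have hK0 : 0 ≤ K := by rw [hK]; positivity
  have hK' : K * (b0 - b) = 2 * j * b := by rw [hK]; field_simp
  let f : Fin j ⊕ Bool → (Fin M → X) → ℝ≥0∞ := fun s z => ENNReal.ofReal (Real.exp (
    Sum.elim (fun k => ∑ i, b * W (y k) (z i))
      (fun t => if t then b / N * pairS W z else b0 / M * pairS W z) s))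
  let p : Fin j ⊕ Bool → ℝ := Sum.elim (fun _ => 2 / N)
    (fun t => if t then 1 - 2 * j / N - K / N else K / N)
  have hS := measurable_pairS W hWmeas (ι := Fin M)
  have hWy : ∀ k, Measurable (fun x => W (y k) x) := fun k =>
    hWmeas.comp (measurable_const.prodMk measurable_id)
  have hfm : ∀ s, Measurable (f s) := by
    rintro (k | t)
    · refine ENNReal.measurable_ofReal.comp (Real.measurable_exp.comp ?_)
      exact Finset.measurable_sum _ fun i _ =>
        ((hWy k).comp (measurable_pi_apply i)).const_mul b
    · refine ENNReal.measurable_ofReal.comp (Real.measurable_exp.comp ?_)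
      cases t
      · simpa using hS.const_mul (b0 / M)
      · simpa using hS.const_mul (b / N)
  have ha0 : 0 ≤ 1 - 2 * j / N - K / N := by
    have : (2 * j + K) / N ≤ 1 := (div_le_one hNpos).2 hNK
    rw [add_div] at this
    linarith
  have ha1 : 1 - 2 * j / N - K / N ≤ 1 := by
    have : 0 ≤ 2 * (j : ℝ) / N := by positivity
    have : 0 ≤ K / N := by positivity
    linarith
  have hp0 : ∀ s, 0 ≤ p s := by
    rintro (k | t)
    · simp only [p, Sum.elim_inl]; positivity
    · cases t
      · simp only [p, Sum.elim_inr]; simp; positivity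
      · simpa [p] using ha0
  have hp1 : ∑ s, p s = 1 := by
    simp [p, Fintype.sum_sum_type]
    ring
  have hH := ENNReal.lintegral_prod_norm_pow_le (μ := Measure.pi (fun _ : Fin M => μ₀))
    Finset.univ (f := f) (fun s _ => (hfm s).aemeasurable) hp1 (fun s _ => hp0 s)
  have hA1 : ∀ x : X, 1 ≤ A := fun x =>
    (aux_one_le μ₀ (fun z => b * W x z) (fun z => mul_nonneg hb.le (hW0 _ _))).trans (hint x)
  calc _ ≤ ∫⁻ z, ∏ s, f s z ^ p s ∂(Measure.pi (fun _ : Fin M => μ₀)) := by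
        refine lintegral_mono fun z => ?_
        have hSz := pairS_nonneg W hW0 z
        simp only [f, aux_rpow_exp]
        rw [← ENNReal.ofReal_prod_of_nonneg (fun _ _ => (Real.exp_pos _).le), ← Real.exp_sum]
        refine ENNReal.ofReal_le_ofReal (Real.exp_le_exp.2 ?_)
        simp only [p, Fintype.sum_sum_type, Sum.elim_inl, Sum.elim_inr, Fintype.sum_bool, if_true,
          Bool.false_eq_true, if_false]
        have e1 : ∑ k, 2 / (N : ℝ) * ∑ i, b * W (y k) (z i)
            = (2 * b / N) * (∑ k, ∑ i, W (y k) (z i)) := by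
          simp_rw [← Finset.mul_sum]
          ring
        rw [e1]
        have e2 : b / N ≤ (1 - 2 * j / N - K / N) * (b / N) + K / N * (b0 / M) := by
          have h1 : K / N * (b0 / N) ≤ K / N * (b0 / M) := by
            have : b0 / N ≤ b0 / M := div_le_div_of_nonneg_left (by linarith) hMpos hMN
            exact mul_le_mul_of_nonneg_left this (by positivity)
          have h2 : (1 - 2 * j / N - K / N) * (b / N) + K / N * (b0 / N) = b / N := by
            field_simp
            linarith
          linarith
        have e3 := mul_le_mul_of_nonneg_right e2 hSz
        linarith
    _ ≤ _ := hH
    _ ≤ _ := by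
        rw [Fintype.prod_sum_type]
        refine mul_le_mul' ?_ ?_
        · calc _ ≤ ∏ k : Fin j, A ^ 2 := by
                refine Finset.prod_le_prod' fun k _ => ?_
                have : ∫⁻ z, f (Sum.inl k) z ∂(Measure.pi (fun _ : Fin M => μ₀)) ≤ A ^ M := by
                  have e : ∀ z, f (Sum.inl k) z
                      = ∏ i, ENNReal.ofReal (Real.exp (b * W (y k) (z i))) := by
                    intro z
                    simp only [f, Sum.elim_inl]
                    rw [Real.exp_sum,
                      ENNReal.ofReal_prod_of_nonneg (fun _ _ => (Real.exp_pos _).le)]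
                  simp_rw [e]
                  rw [aux_lintegral_prod μ₀
                    (fun x => ENNReal.ofReal (Real.exp (b * W (y k) x)))
                    (ENNReal.measurable_ofReal.comp
                      (Real.measurable_exp.comp ((hWy k).const_mul b)))]
                  simp only [Fintype.card_fin]
                  exact pow_le_pow_left' (hint _) M
                calc _ ≤ (A ^ M) ^ (2 / (N : ℝ)) :=
                      ENNReal.rpow_le_rpow this (by positivity)
                  _ = A ^ ((M : ℝ) * (2 / N)) := by
                      rw [← ENNReal.rpow_natCast, ← ENNReal.rpow_mul]
                  _ ≤ A ^ (2 : ℝ) := by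
                      refine ENNReal.rpow_le_rpow_of_exponent_le (hA1 (y k)) ?_
                      rw [← mul_div_assoc, div_le_iff₀ hNpos]
                      linarith
                  _ = A ^ 2 := by
                      exact_mod_cast ENNReal.rpow_natCast A 2
            _ = A ^ (2 * j) := by
                simp [pow_mul]
        · rw [Fintype.prod_bool]
          refine mul_le_mul' ?_ ?_
          · have h1 : 1 ≤ ∫⁻ z, f (Sum.inr true) z ∂(Measure.pi (fun _ : Fin M => μ₀)) := by
              refine aux_one_le _ _ fun z => ?_
              have := pairS_nonneg W hW0 z
              simp
              positivity
            calc _ ≤ (∫⁻ z, f (Sum.inr true) z ∂(Measure.pi (fun _ : Fin M => μ₀))) ^ (1 : ℝ) :=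
                  ENNReal.rpow_le_rpow_of_exponent_le h1 (by simpa [p] using ha1)
              _ = _ := by simp [f]
          · simp [f, p]

/-- Iterated Hölder estimate for marginal densities of Gibbs measures at negative
temperature: under a uniform-in-`x` integrability bound for `e^{-βW(x,·)}` and an
exponential bound on the partition functions for all `β' ∈ [β₀,β]`, the density of the
`j`-th marginal of the Gibbs measure satisfies
`ρ_j^{(N)}(y) ≤ C_j e^{-(β/N) Σ_{k≠l≤j} W(y_k,y_l)}` for all `N` sufficiently large,
with `C_j` independent of `N`. -/
theorem stmt17 {X : Type*} [MetricSpace X] [CompactSpace X] [MeasurableSpace X] [BorelSpace X]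
    (μ₀ : Measure X) [IsProbabilityMeasure μ₀]
    (W : X → X → ℝ) (hWmeas : Measurable (fun p : X × X => W p.1 p.2))
    (hWsym : ∀ x y, W x y = W y x) (hW0 : ∀ x y, 0 ≤ W x y)
    (β₀ β : ℝ) (hβ₀ : β₀ < β) (hβ : β < 0)
    (A : ℝ≥0∞) (hA : A ≠ ⊤)
    (hint : ∀ x : X, ∫⁻ y, ENNReal.ofReal (Real.exp (-β * W x y)) ∂μ₀ ≤ A)
    (C : ℝ)
    (hZ : ∀ β' ∈ Set.Icc β₀ β, ∀ N : ℕ, 1 ≤ N →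
      ∫⁻ x : Fin N → X, ENNReal.ofReal (Real.exp (-β' * pairHam W N x))
          ∂(Measure.pi (fun _ : Fin N => μ₀))
        ≤ ENNReal.ofReal (Real.exp (C * N)))
    (j : ℕ) (hj : 1 ≤ j) :
    ∃ (Cj : ℝ) (N₀ : ℕ), ∀ N : ℕ, N₀ ≤ N → j < N → ∀ y : Fin j → X,
      ((∫⁻ z : Fin (N - j) → X,
          ENNReal.ofReal (Real.exp (-β * pairHam W N (fun i : Fin N =>
            if h : (i : ℕ) < j then y ⟨i, h⟩
            else z ⟨(i : ℕ) - j, by have := i.isLt; omega⟩)))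
          ∂(Measure.pi (fun _ : Fin (N - j) => μ₀)))
        / (∫⁻ x : Fin N → X, ENNReal.ofReal (Real.exp (-β * pairHam W N x))
            ∂(Measure.pi (fun _ : Fin N => μ₀))))
      ≤ ENNReal.ofReal (Cj * Real.exp (-(β / N) *
          ∑ k : Fin j, ∑ l : Fin j, if k ≠ l then W (y k) (y l) else 0)) := by
  have hd : 0 < -β₀ - -β := by linarith
  set K : ℝ := 2 * j * (-β) / (-β₀ - -β) with hK
  have hK0 : 0 ≤ K := by
    have : 0 < -β := by linarith
    positivity
  refine ⟨(A ^ (2 * j)).toReal * Real.exp (|C| * K), ⌈2 * j + K⌉₊, ?_⟩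
  intro N hN hjN y
  have hNK : 2 * j + K ≤ N := Nat.ceil_le.1 hN
  obtain ⟨M, hM⟩ : ∃ M, M = N - j := ⟨_, rfl⟩
  have hM0 : 0 < M := by omega
  have hNM : N = j + M := by omega
  have hNpos : (0 : ℝ) < N := by
    have : 0 < N := by omega
    exact_mod_cast this
  have hMN : (M : ℝ) ≤ N := by
    have : M ≤ N := by omega
    exact_mod_cast this
  have hpair : ∀ (L : ℕ) (x : Fin L → X) (t : ℝ), -t * pairHam W L x = -t / L * pairS W x := by
    intro L x t
    unfold pairHam pairS
    ring
  set Z := ∫⁻ x : Fin N → X, ENNReal.ofReal (Real.exp (-β * pairHam W N x))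
            ∂(Measure.pi (fun _ : Fin N => μ₀)) with hZdef
  have hZ1 : 1 ≤ Z := by
    refine aux_one_le _ _ fun x => ?_
    rw [hpair]
    have := pairS_nonneg W hW0 x
    have : 0 < -β := by linarith
    positivity
  have hZtop : Z ≠ ⊤ :=
    ne_top_of_le_ne_top ENNReal.ofReal_ne_top (hZ β ⟨hβ₀.le, le_rfl⟩ N (by omega))
  generalize_proofs pf
  revert pf
  rw [← hM]
  intro pf
  let e : Fin j ⊕ Fin M ≃ Fin N := finSumFinEquiv.trans (finCongr hNM.symm)
  -- the smaller partition function is dominated by Z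
  have hF : ∫⁻ z : Fin M → X, ENNReal.ofReal (Real.exp (-β / N * pairS W z))
      ∂(Measure.pi (fun _ : Fin M => μ₀)) ≤ Z := by
    have hmap := aux_map_pi μ₀ (fun k : Fin M => e (Sum.inr k))
      (e.injective.comp Sum.inr_injective)
    rw [← hmap, lintegral_map]
    · refine lintegral_mono fun x => ENNReal.ofReal_le_ofReal (Real.exp_le_exp.2 ?_)
      rw [hpair, pairS_equiv W e x, pairS_sum W hWsym]
      have h1 := pairS_nonneg W hW0 (fun i => x (e (Sum.inl i)))
      have h2 : 0 ≤ ∑ i, ∑ k, W (x (e (Sum.inl i))) (x (e (Sum.inr k))) :=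
        Finset.sum_nonneg fun i _ => Finset.sum_nonneg fun k _ => hW0 _ _
      have h3 : 0 ≤ -β / N := div_nonneg (by linarith) hNpos.le
      refine mul_le_mul_of_nonneg_left ?_ h3
      linarith
    · exact ENNReal.measurable_ofReal.comp (Real.measurable_exp.comp
        ((measurable_pairS W hWmeas).const_mul _))
    · exact measurable_pi_lambda _ fun k => measurable_pi_apply _
  have hG : (∫⁻ z : Fin M → X, ENNReal.ofReal (Real.exp (-β₀ / M * pairS W z))
      ∂(Measure.pi (fun _ : Fin M => μ₀))) ^ (K / N) ≤ ENNReal.ofReal (Real.exp (|C| * K)) := by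
    have h1 := hZ β₀ ⟨le_rfl, hβ₀.le⟩ M hM0
    simp_rw [hpair] at h1
    refine (ENNReal.rpow_le_rpow h1 (by positivity)).trans ?_
    rw [aux_rpow_exp]
    refine ENNReal.ofReal_le_ofReal (Real.exp_le_exp.2 ?_)
    have h2 : C * M ≤ |C| * N := by
      have := le_abs_self C
      have := abs_nonneg C
      calc C * M ≤ |C| * M := by gcongr
        _ ≤ |C| * N := by gcongr
    calc K / N * (C * M) ≤ K / N * (|C| * N) := by gcongr
      _ = |C| * K := by field_simp
  have hHol := aux_holder μ₀ W hWmeas hW0 (-β) (-β₀) (by linarith) (by linarith) A hint j M N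
    hM0 hNM y K hK hNK
  refine ENNReal.div_le_of_le_mul ?_
  have hdec : ∀ z : Fin M → X, ENNReal.ofReal (Real.exp (-β * pairHam W N (fun i : Fin N =>
            if h : (i : ℕ) < j then y ⟨i, h⟩
            else z ⟨(i : ℕ) - j, by have := i.isLt; omega⟩)))
      = ENNReal.ofReal (Real.exp (-(β / N) * pairS W y)) *
        ENNReal.ofReal (Real.exp ((2 * (-β) / N) * (∑ k, ∑ i, W (y k) (z i))
        + (-β) / N * pairS W z)) := by
    intro z
    rw [← ENNReal.ofReal_mul (Real.exp_pos _).le, ← Real.exp_add, hpair, pairS_equiv W e,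
      pairS_sum W hWsym]
    simp [e]
    ring_nf
  simp_rw [hdec]
  rw [lintegral_const_mul' _ _ ENNReal.ofReal_ne_top]
  change _ ≤ ENNReal.ofReal ((A ^ (2 * j)).toReal * Real.exp (|C| * K) *
    Real.exp (-(β / N) * pairS W y)) * Z
  rw [ENNReal.ofReal_mul (by positivity), ENNReal.ofReal_mul (by positivity),
    ENNReal.ofReal_toReal (ENNReal.pow_ne_top hA)]
  calc _ ≤ ENNReal.ofReal (Real.exp (-(β / N) * pairS W y)) *
        (A ^ (2 * j) * (Z * ENNReal.ofReal (Real.exp (|C| * K)))) :=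
        mul_le_mul' le_rfl (hHol.trans (mul_le_mul' le_rfl (mul_le_mul' hF hG)))
    _ = _ := by ring
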